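/- Let F : ℝ⁴ → ℝ⁴ be a bijection with layers U_n and S_n as defined. Suppose x ∈ U_{n₁} ∩ S_{n₂} for some integers n₁, n₂ ≥ 1. Then there exist k ∈ ℤ and an integer n ≥ 1 such that either F^k(x) ∈ U_n ∩ S_n or F^k(x) ∈ U_n ∩ S_{n−1}. Consequently, every heteroclinic point lying in a pair of positive-index layers has an iterate lying in a layer pair of the form (U_n, S_n) or (U_n, S_{n−1}) with n ≥ 1, so searching only such pairs finds all heteroclinic trajectories. -/

import Mathlib

/-!
Iterating the conjugacy equations gives `F ^ k (W (θ, s)) = W (θ + k * ω, lam ^ k * s)` for every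
integer `k`, so `F ^ k` maps `U n` into `U (n + k)` and `S n` into `S (n - k)`. The sum of the two
layer indices of a heteroclinic point is therefore constant along its trajectory: an iterate of
`x ∈ U n₁ ∩ S n₂` lies in `U n ∩ S (n₁ + n₂ - n)` for any prescribed `n`. Taking `n` to be
`(n₁ + n₂) / 2` rounded up makes the second index `n` or `n - 1`, according to parity.
-/

/-- The `n`-th unstable layer. -/
def unstableLayer (W : ℝ × ℝ → Fin 4 → ℝ) (D lam : ℝ) (n : ℤ) : Set (Fin 4 → ℝ) :=
  {x | ∃ θ s : ℝ, D * lam ^ (n - 1) ≤ |s| ∧ |s| ≤ D * lam ^ n ∧ x = W (θ, s)}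

/-- The `n`-th stable layer. -/
def stableLayer (W : ℝ × ℝ → Fin 4 → ℝ) (D lam : ℝ) (n : ℤ) : Set (Fin 4 → ℝ) :=
  {x | ∃ θ s : ℝ, D * lam ^ (-(n - 1)) ≤ |s| ∧ |s| ≤ D * lam ^ (-n) ∧ x = W (θ, s)}

lemma zpow_apply_param {F : Equiv.Perm (Fin 4 → ℝ)} {ω lam : ℝ} (hlam : 0 < lam)
    {W : ℝ × ℝ → Fin 4 → ℝ} (hW : ∀ θ s : ℝ, F (W (θ, s)) = W (θ + ω, lam * s))
    (k : ℤ) (θ s : ℝ) : (F ^ k) (W (θ, s)) = W (θ + k * ω, lam ^ k * s) := by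
  induction k using Int.induction_on with
  | zero => simp
  | succ i ih =>
    rw [add_comm (i : ℤ) 1, zpow_one_add, Equiv.Perm.mul_apply, ih, hW, zpow_one_add₀ hlam.ne']
    push_cast
    congr 2 <;> ring
  | pred i ih =>
    -- Cancelling one application of the injective map `F` reduces the backward step to `hW`.
    apply F.injective
    rw [← Equiv.Perm.mul_apply, ← zpow_one_add, hW, ← mul_assoc, ← zpow_one_add₀ hlam.ne',
      add_sub_cancel, ih]
    push_cast
    congr 2
    ring

lemma zpow_mem_unstableLayer {F : Equiv.Perm (Fin 4 → ℝ)} {ω lam D : ℝ} (hlam : 0 < lam)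
    {W : ℝ × ℝ → Fin 4 → ℝ} (hW : ∀ θ s : ℝ, F (W (θ, s)) = W (θ + ω, lam * s))
    {x : Fin 4 → ℝ} {n : ℤ} (hx : x ∈ unstableLayer W D lam n) (k : ℤ) :
    (F ^ k) x ∈ unstableLayer W D lam (n + k) := by
  obtain ⟨θ, s, h₁, h₂, rfl⟩ := hx
  have hk : 0 < lam ^ k := zpow_pos hlam k
  refine ⟨θ + k * ω, lam ^ k * s, ?_, ?_, zpow_apply_param hlam hW k θ s⟩
  · rw [abs_mul, abs_of_pos hk, show n + k - 1 = k + (n - 1) by ring, zpow_add₀ hlam.ne',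
      mul_left_comm]
    gcongr
  · rw [abs_mul, abs_of_pos hk, add_comm n k, zpow_add₀ hlam.ne', mul_left_comm]
    gcongr

/-- The stable layers are traversed in the opposite direction, because the layer `S n` is bounded
by powers of `lam` with exponent decreasing in `n`. -/
lemma zpow_mem_stableLayer {F : Equiv.Perm (Fin 4 → ℝ)} {ω lam D : ℝ} (hlam : 0 < lam)
    {W : ℝ × ℝ → Fin 4 → ℝ} (hW : ∀ θ s : ℝ, F (W (θ, s)) = W (θ + ω, lam * s))
    {x : Fin 4 → ℝ} {n : ℤ} (hx : x ∈ stableLayer W D lam n) (k : ℤ) :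
    (F ^ k) x ∈ stableLayer W D lam (n - k) := by
  obtain ⟨θ, s, h₁, h₂, rfl⟩ := hx
  have hk : 0 < lam ^ k := zpow_pos hlam k
  refine ⟨θ + k * ω, lam ^ k * s, ?_, ?_, zpow_apply_param hlam hW k θ s⟩
  · rw [abs_mul, abs_of_pos hk, show -(n - k - 1) = k + -(n - 1) by ring, zpow_add₀ hlam.ne',
      mul_left_comm]
    gcongr
  · rw [abs_mul, abs_of_pos hk, show -(n - k) = k + -n by ring, zpow_add₀ hlam.ne',
      mul_left_comm]
    gcongr

/-- Every heteroclinic point in a pair of positive-index layers has an iterate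
lying in a layer pair of the form `(U n, S n)` or `(U n, S (n - 1))` with `n ≥ 1`. -/
theorem heteroclinic_layer_reduction (F : Equiv.Perm (Fin 4 → ℝ))
    (ωu lamu Du ωs lams Ds : ℝ)
    (hlamu : 1 < lamu) (hDu : 0 < Du) (hlams0 : 0 < lams) (hlams1 : lams < 1)
    (hDs : 0 < Ds) (W₁u W₂s : ℝ × ℝ → Fin 4 → ℝ)
    (hWu : ∀ θ s : ℝ, F (W₁u (θ, s)) = W₁u (θ + ωu, lamu * s))
    (hWs : ∀ θ s : ℝ, F (W₂s (θ, s)) = W₂s (θ + ωs, lams * s))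
    (x : Fin 4 → ℝ) (n₁ n₂ : ℤ) (hn₁ : 1 ≤ n₁) (hn₂ : 1 ≤ n₂)
    (hx : x ∈ unstableLayer W₁u Du lamu n₁ ∩ stableLayer W₂s Ds lams n₂) :
    ∃ (k n : ℤ), 1 ≤ n ∧
      ((F ^ k) x ∈ unstableLayer W₁u Du lamu n ∩ stableLayer W₂s Ds lams n ∨
       (F ^ k) x ∈ unstableLayer W₁u Du lamu n ∩ stableLayer W₂s Ds lams (n - 1)) := by
  obtain ⟨hu, hs⟩ := hx
  have hlamu0 : 0 < lamu := one_pos.trans hlamu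
  -- The index `n` is half of `n₁ + n₂`, rounded up.
  obtain ⟨n, hn⟩ : ∃ n : ℤ, n₁ + n₂ = 2 * n ∨ n₁ + n₂ = 2 * n - 1 :=
    ⟨(n₁ + n₂ + 1) / 2, by omega⟩
  have hu' := zpow_mem_unstableLayer hlamu0 hWu hu (n - n₁)
  have hs' := zpow_mem_stableLayer hlams0 hWs hs (n - n₁)
  rw [add_sub_cancel] at hu'
  refine ⟨n - n₁, n, by omega, ?_⟩
  rcases hn with hn | hn
  · rw [show n₂ - (n - n₁) = n by omega] at hs'
    exact Or.inl ⟨hu', hs'⟩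
  · rw [show n₂ - (n - n₁) = n - 1 by omega] at hs'
    exact Or.inr ⟨hu', hs'⟩
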